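/- arXiv:1905.08781 — 6 statements merged into one kernel-verified Lean document; each statement's English description precedes it below -/
import Mathlib

section
/- If (f_n)_{n∈ℕ} is a pointwise nondecreasing sequence of functions X → ℝ ∪ {+∞} converging pointwise to a function f : X → ℝ ∪ {+∞}, then (L f_n) converges pointwise to L f and (U f_n) converges pointwise to U f; that is, the lower and upper transition operators are continuous with respect to nondecreasing sequences of extended real-valued functions. -/
open Filter Topology

variable {X : Type*}

/-- The application of a transition "matrix" `T` to an extended-real-valued
function `f`, `(Tf)(x) = ∑ y, T x y * f y`, with the convention `0 * ⊤ = 0`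
(which is the convention of `EReal` multiplication). -/
noncomputable def matApply [Fintype X] (T : X → X → ℝ) (f : X → EReal) (x : X) : EReal :=
  ∑ y, (T x y : EReal) * f y

/-- `T` is a transition matrix: nonnegative entries, rows summing to one. -/
def IsTransMat [Fintype X] (T : X → X → ℝ) : Prop :=
  (∀ x y, 0 ≤ T x y) ∧ ∀ x, ∑ y, T x y = 1

/-- `𝒯` has separately specified rows. -/
def HasSepRows [Fintype X] (𝒯 : Set (X → X → ℝ)) : Prop :=
  ∀ sel : X → X → X → ℝ, (∀ x, sel x ∈ 𝒯) → ∃ T ∈ 𝒯, ∀ x y, T x y = sel x x y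

/-- The lower transition operator of `𝒯`. -/
noncomputable def lowerOp [Fintype X] (𝒯 : Set (X → X → ℝ)) (f : X → EReal) (x : X) : EReal :=
  ⨅ T ∈ 𝒯, matApply T f x

/-- The upper transition operator of `𝒯`. -/
noncomputable def upperOp [Fintype X] (𝒯 : Set (X → X → ℝ)) (f : X → EReal) (x : X) : EReal :=
  ⨆ T ∈ 𝒯, matApply T f x

theorem aux_mul_ne_bot {c : ℝ} (hc : 0 ≤ c) {a : EReal} (ha : a ≠ ⊥) : (c : EReal) * a ≠ ⊥ := by
  intro h
  rw [EReal.mul_eq_bot] at h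
  rcases h with h | h | h | h
  · exact EReal.coe_ne_bot _ h.1
  · exact ha h.2
  · exact EReal.coe_ne_top _ h.1
  · exact absurd (EReal.coe_neg'.1 h.1) (not_lt.2 hc)

theorem aux_sum_ne_bot {ι : Type*} (s : Finset ι) (a : ι → EReal) (ha : ∀ i, a i ≠ ⊥) :
    ∑ i ∈ s, a i ≠ ⊥ := by
  classical
  induction s using Finset.induction_on with
  | empty => simp
  | insert i s hi ih =>
    rw [Finset.sum_insert hi]
    exact EReal.add_ne_bot_iff.2 ⟨ha i, ih⟩

theorem aux_tendsto_sum {ι : Type*} (s : Finset ι) (a : ℕ → ι → EReal) (b : ι → EReal)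
    (hb : ∀ i, b i ≠ ⊥) (h : ∀ i, Tendsto (fun n => a n i) atTop (𝓝 (b i))) :
    Tendsto (fun n => ∑ i ∈ s, a n i) atTop (𝓝 (∑ i ∈ s, b i)) := by
  classical
  induction s using Finset.induction_on with
  | empty => simp
  | insert i s hi ih =>
    simp only [Finset.sum_insert hi]
    have := EReal.continuousAt_add (p := (b i, ∑ i ∈ s, b i))
      (Or.inr (aux_sum_ne_bot s b hb)) (Or.inl (hb i))
    exact this.tendsto.comp ((h i).prodMk_nhds ih)

theorem aux_tendsto_mul {c : ℝ} {a : ℕ → EReal} {b : EReal}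
    (h : Tendsto a atTop (𝓝 b)) : Tendsto (fun n => (c : EReal) * a n) atTop (𝓝 (c * b)) := by
  by_cases hc : c = 0
  · subst hc; simp
  have hc' : (c : EReal) ≠ 0 := by exact_mod_cast hc
  have := EReal.continuousAt_mul (p := ((c : EReal), b)) (Or.inl hc') (Or.inl hc')
    (Or.inl (EReal.coe_ne_bot c)) (Or.inl (EReal.coe_ne_top c))
  exact this.tendsto.comp (tendsto_const_nhds.prodMk_nhds h)

theorem aux_matApply_tendsto [Fintype X] {T : X → X → ℝ} (hT : IsTransMat T)
    {f : ℕ → X → EReal} {g : X → EReal} (hgbot : ∀ x, g x ≠ ⊥)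
    (hlim : ∀ x, Tendsto (fun n => f n x) atTop (𝓝 (g x))) (x : X) :
    Tendsto (fun n => matApply T (f n) x) atTop (𝓝 (matApply T g x)) :=
  aux_tendsto_sum _ _ _ (fun y => aux_mul_ne_bot (hT.1 x y) (hgbot y))
    (fun y => aux_tendsto_mul (hlim y))

theorem aux_matApply_mono [Fintype X] {T : X → X → ℝ} (hT : IsTransMat T)
    {f g : X → EReal} (h : ∀ y, f y ≤ g y) (x : X) : matApply T f x ≤ matApply T g x :=
  Finset.sum_le_sum fun y _ =>
    mul_le_mul_of_nonneg_left (h y) (EReal.coe_nonneg.2 (hT.1 x y))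

theorem aux_matApply_real [Fintype X] {f : X → EReal} (h : ∀ y, f y ≠ ⊥) (h' : ∀ y, f y ≠ ⊤)
    (x : X) : Continuous fun T : X → X → ℝ => matApply T f x := by
  have : (fun T : X → X → ℝ => matApply T f x)
      = fun T => ((∑ y, T x y * (f y).toReal : ℝ) : EReal) := by
    funext T
    have hs : ∀ s : Finset X, ∑ y ∈ s, (T x y : EReal) * f y
        = ((∑ y ∈ s, T x y * (f y).toReal : ℝ) : EReal) := by
      classical
      intro s
      induction s using Finset.induction_on with
      | empty => simp
      | insert i s hi ih =>
        rw [Finset.sum_insert hi, Finset.sum_insert hi, ih, EReal.coe_add, EReal.coe_mul,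
          EReal.coe_toReal (h' i) (h i)]
    exact hs _
  rw [this]
  exact continuous_coe_real_ereal.comp (by fun_prop)

theorem aux_compact [Fintype X] {𝒯 : Set (X → X → ℝ)} (hmem : ∀ T ∈ 𝒯, IsTransMat T)
    (hcl : IsClosed 𝒯) : IsCompact 𝒯 := by
  refine (isCompact_Icc (a := (0 : X → X → ℝ)) (b := 1)).of_isClosed_subset hcl ?_
  intro T hT
  refine ⟨fun x y => (hmem T hT).1 x y, fun x y => ?_⟩
  have := Finset.single_le_sum (f := T x) (fun y _ => (hmem T hT).1 x y) (Finset.mem_univ y)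
  rw [(hmem T hT).2 x] at this
  exact this

/-- The lower and upper transition operators are continuous with respect to pointwise
nondecreasing sequences of functions `X → ℝ ∪ {+∞}`. -/
theorem lowerOp_upperOp_monotone_continuity [Fintype X] [Nonempty X]
    (𝒯 : Set (X → X → ℝ))
    (hmem : ∀ T ∈ 𝒯, IsTransMat T) (hne : 𝒯.Nonempty) (hcl : IsClosed 𝒯)
    (hcv : Convex ℝ 𝒯) (hsep : HasSepRows 𝒯)
    (f : ℕ → X → EReal) (hfbot : ∀ n x, f n x ≠ ⊥)
    (hmono : ∀ x, Monotone fun n => f n x)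
    (g : X → EReal) (hgbot : ∀ x, g x ≠ ⊥)
    (hlim : ∀ x, Tendsto (fun n => f n x) atTop (𝓝 (g x))) :
    (∀ x, Tendsto (fun n => lowerOp 𝒯 (f n) x) atTop (𝓝 (lowerOp 𝒯 g x))) ∧
    (∀ x, Tendsto (fun n => upperOp 𝒯 (f n) x) atTop (𝓝 (upperOp 𝒯 g x))) := by
  have hle : ∀ n y, f n y ≤ g y := fun n y => (hmono y).ge_of_tendsto (hlim y) n
  constructor
  · intro x
    have hLle : ∀ n, lowerOp 𝒯 (f n) x ≤ lowerOp 𝒯 g x := fun n =>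
      iInf₂_mono fun T hT => aux_matApply_mono (hmem T hT) (hle n) x
    have hLmono : Monotone fun n => lowerOp 𝒯 (f n) x := fun m n hmn =>
      iInf₂_mono fun T hT => aux_matApply_mono (hmem T hT) (fun y => hmono y hmn) x
    refine tendsto_order.2 ⟨fun a ha => ?_, fun a ha => Eventually.of_forall fun n =>
      (hLle n).trans_lt ha⟩
    obtain ⟨b, hab, hb⟩ := exists_between ha
    by_contra hcon
    have hsmall : ∀ n, lowerOp 𝒯 (f n) x ≤ a := by
      intro n
      by_contra hn
      exact hcon (eventually_atTop.2 ⟨n, fun m hm => (not_le.1 hn).trans_le (hLmono hm)⟩)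
    let F : ℕ → X → EReal := fun n y => min (f n y) (((n : ℝ)) : EReal)
    have hFle : ∀ n y, F n y ≤ f n y := fun n y => min_le_left _ _
    have hFbot : ∀ n y, F n y ≠ ⊥ := by
      intro n y h
      rcases min_eq_bot.1 h with h | h
      · exact hfbot n y h
      · exact EReal.coe_ne_bot _ h
    have hFtop : ∀ n y, F n y ≠ ⊤ := fun n y =>
      ((min_le_right _ _).trans_lt (EReal.coe_lt_top _)).ne
    have hFmono : ∀ y m n, m ≤ n → F m y ≤ F n y := fun y m n hmn =>
      min_le_min (hmono y hmn) (by exact_mod_cast hmn)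
    have hFlim : ∀ y, Tendsto (fun n => F n y) atTop (𝓝 (g y)) := by
      intro y
      have h1 : Tendsto (fun n : ℕ => ((n : ℝ) : EReal)) atTop (𝓝 ⊤) := by
        rw [EReal.tendsto_nhds_top_iff_real]
        intro r
        filter_upwards [tendsto_natCast_atTop_atTop.eventually_gt_atTop r] with n hn
        exact_mod_cast hn
      have := (hlim y).min h1
      rwa [min_top_right] at this
    let K : ℕ → Set (X → X → ℝ) := fun n => 𝒯 ∩ {T | matApply T (F n) x ≤ b}
    have hKcl : ∀ n, IsClosed (K n) := fun n =>
      hcl.inter (isClosed_le (aux_matApply_real (hFbot n) (hFtop n) x) continuous_const)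
    have hKne : ∀ n, (K n).Nonempty := by
      intro n
      have h1 : lowerOp 𝒯 (f n) x < b := (hsmall n).trans_lt hab
      obtain ⟨T, hT, h2⟩ : ∃ T ∈ 𝒯, matApply T (f n) x < b := by
        simpa only [lowerOp, iInf_lt_iff, exists_prop] using h1
      exact ⟨T, hT, (aux_matApply_mono (hmem T hT) (hFle n) x).trans h2.le⟩
    obtain ⟨T, hT⟩ := IsCompact.nonempty_iInter_of_sequence_nonempty_isCompact_isClosed K
      (fun n T hT => ⟨hT.1, (aux_matApply_mono (hmem T hT.1)
        (fun y => hFmono y n (n + 1) n.le_succ) x).trans hT.2⟩) hKne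
      ((aux_compact hmem hcl).of_isClosed_subset (hKcl 0) Set.inter_subset_left) hKcl
    rw [Set.mem_iInter] at hT
    have hT0 := (hT 0).1
    have h3 : matApply T g x ≤ b :=
      le_of_tendsto' (aux_matApply_tendsto (hmem T hT0) hgbot hFlim x) fun n => (hT n).2
    exact absurd ((iInf₂_le T hT0).trans h3) (not_le.2 hb)
  · intro x
    have hUle : ∀ n, upperOp 𝒯 (f n) x ≤ upperOp 𝒯 g x := fun n =>
      iSup₂_mono fun T hT => aux_matApply_mono (hmem T hT) (hle n) x
    refine tendsto_order.2 ⟨fun a ha => ?_, fun a ha => Eventually.of_forall fun n =>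
      (hUle n).trans_lt ha⟩
    obtain ⟨T, hT, h2⟩ : ∃ T ∈ 𝒯, a < matApply T g x := by
      simpa only [upperOp, lt_iSup_iff, exists_prop] using ha
    filter_upwards [(aux_matApply_tendsto (hmem T hT) hgbot hlim x).eventually_const_lt h2]
      with n hn
    exact hn.trans_le (le_iSup₂ (f := fun T (_ : T ∈ 𝒯) => matApply T (f n) x) T hT)
end

section
/- There exists a single transition matrix T ∈ 𝒯 such that, for every x ∈ X, the limit lim_{n→∞} h_T^n(x) exists in [0,+∞] and equals hlow*(x), where hlow* := lim_{n→∞} hlow^n; that is, the lower expected hitting time of the imprecise Markov chain is attained by one homogeneous (precise) transition matrix compatible with 𝒯. -/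
open Filter Topology

variable {X : Type*}

/-- The `{0,1}`-indicator of a set `B ⊆ X`, as an extended-real-valued function. -/
noncomputable def indE (B : Set X) : X → EReal := fun x => Set.indicator B 1 x

/-- The lower hitting-time iterates: `hlow⁰ = 1_{Aᶜ}`,
`hlowⁿ⁺¹ = 1_{Aᶜ} + 1_{Aᶜ} · (L hlowⁿ)`. -/
noncomputable def hlowIter [Fintype X] (𝒯 : Set (X → X → ℝ)) (A : Set X) : ℕ → X → EReal
  | 0 => indE Aᶜ
  | n + 1 => fun x => indE Aᶜ x + indE Aᶜ x * lowerOp 𝒯 (hlowIter 𝒯 A n) x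

/-- The upper hitting-time iterates: `hup⁰ = 1_{Aᶜ}`,
`hupⁿ⁺¹ = 1_{Aᶜ} + 1_{Aᶜ} · (U hupⁿ)`. -/
noncomputable def hupIter [Fintype X] (𝒯 : Set (X → X → ℝ)) (A : Set X) : ℕ → X → EReal
  | 0 => indE Aᶜ
  | n + 1 => fun x => indE Aᶜ x + indE Aᶜ x * upperOp 𝒯 (hupIter 𝒯 A n) x
/-- The hitting-time iterates for a single (precise) transition matrix `T`:
`h_T⁰ = 1_{Aᶜ}`, `h_Tⁿ⁺¹ = 1_{Aᶜ} + 1_{Aᶜ} · (T h_Tⁿ)`; their pointwise limit is the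
expected hitting time of `A` for the homogeneous Markov chain with transition matrix `T`. -/
noncomputable def hPrecIter [Fintype X] (T : X → X → ℝ) (A : Set X) : ℕ → X → EReal
  | 0 => indE Aᶜ
  | n + 1 => fun x => indE Aᶜ x + indE Aᶜ x * matApply T (hPrecIter T A n) x

lemma lht_nonneg_sum_tendsto {ι : Type*} (s : Finset ι) (u : ι → ℕ → EReal) (l : ι → EReal)
    (hl : ∀ i, 0 ≤ l i) (h : ∀ i, Tendsto (u i) atTop (𝓝 (l i))) :
    Tendsto (fun n => ∑ i ∈ s, u i n) atTop (𝓝 (∑ i ∈ s, l i)) := by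
  classical
  induction s using Finset.induction_on with
  | empty => simp
  | insert a s ha ih =>
    simp only [Finset.sum_insert ha]
    have h2 : 0 ≤ ∑ i ∈ s, l i := Finset.sum_nonneg (fun i _ => hl i)
    have hc : ContinuousAt (fun p : EReal × EReal => p.1 + p.2) (l a, ∑ i ∈ s, l i) :=
      EReal.continuousAt_add
        (Or.inr (ne_of_gt (lt_of_lt_of_le EReal.bot_lt_zero h2)))
        (Or.inl (ne_of_gt (lt_of_lt_of_le EReal.bot_lt_zero (hl a))))
    exact hc.tendsto.comp ((h a).prodMk_nhds ih)

lemma lht_matApply_coe [Fintype X] (T : X → X → ℝ) (f : X → ℝ) (x : X) :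
    matApply T (fun y => (f y : EReal)) x = ((∑ y, T x y * f y : ℝ) : EReal) := by
  classical
  unfold matApply
  induction (Finset.univ : Finset X) using Finset.induction_on with
  | empty => simp
  | insert a s ha ih => rw [Finset.sum_insert ha, Finset.sum_insert ha, ih]; push_cast; rfl

lemma lht_matApply_mono [Fintype X] {T : X → X → ℝ} (hT : IsTransMat T) {f g : X → EReal}
    (h : f ≤ g) (x : X) : matApply T f x ≤ matApply T g x := by
  unfold matApply
  exact Finset.sum_le_sum fun y _ =>
    mul_le_mul_of_nonneg_left (h y) (EReal.coe_nonneg.2 (hT.1 x y))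

lemma lht_matApply_nonneg [Fintype X] {T : X → X → ℝ} (hT : IsTransMat T) {f : X → EReal}
    (h : ∀ x, 0 ≤ f x) (x : X) : 0 ≤ matApply T f x := by
  unfold matApply
  exact Finset.sum_nonneg fun y _ => mul_nonneg (EReal.coe_nonneg.2 (hT.1 x y)) (h y)

lemma lht_step_mono (A : Set X) (x : X) {a b : EReal} (h : a ≤ b) :
    indE Aᶜ x + indE Aᶜ x * a ≤ indE Aᶜ x + indE Aᶜ x * b := by
  by_cases hx : x ∈ A
  · simp [indE, hx]
  · simpa [indE, hx] using add_le_add le_rfl h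

lemma lht_ind_nonneg (A : Set X) (x : X) : 0 ≤ indE Aᶜ x := by
  by_cases hx : x ∈ A <;> simp [indE, hx]

lemma lht_compact [Fintype X] (𝒯 : Set (X → X → ℝ))
    (hmem : ∀ T ∈ 𝒯, IsTransMat T) (hcl : IsClosed 𝒯) : IsCompact 𝒯 := by
  refine IsCompact.of_isClosed_subset
    (isCompact_univ_pi (fun _ : X => isCompact_univ_pi (fun _ : X => isCompact_Icc (a := (0:ℝ)) (b := 1)))) hcl ?_
  intro T hT x _ y _
  refine ⟨(hmem T hT).1 x y, ?_⟩
  rw [← (hmem T hT).2 x]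
  exact Finset.single_le_sum (fun z _ => (hmem T hT).1 x z) (Finset.mem_univ y)

lemma lht_lower_attained [Fintype X] (𝒯 : Set (X → X → ℝ))
    (hmem : ∀ T ∈ 𝒯, IsTransMat T) (hne : 𝒯.Nonempty) (hcl : IsClosed 𝒯)
    (hsep : HasSepRows 𝒯) (f : X → ℝ) :
    ∃ T ∈ 𝒯, ∀ x, lowerOp 𝒯 (fun y => (f y : EReal)) x = ((∑ y, T x y * f y : ℝ) : EReal) := by
  have h1 : ∀ x, ∃ T ∈ 𝒯, ∀ S ∈ 𝒯, ∑ y, T x y * f y ≤ ∑ y, S x y * f y := by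
    intro x
    obtain ⟨T, hT, hm⟩ := (lht_compact 𝒯 hmem hcl).exists_isMinOn hne
      (f := fun T : X → X → ℝ => ∑ y, T x y * f y) (by fun_prop)
    exact ⟨T, hT, fun S hS => hm hS⟩
  choose sel hs hm using h1
  obtain ⟨T, hT, he⟩ := hsep sel hs
  refine ⟨T, hT, fun x => ?_⟩
  simp only [lowerOp, lht_matApply_coe]
  apply le_antisymm
  · exact iInf₂_le T hT
  · refine le_iInf₂ fun S hS => EReal.coe_le_coe_iff.2 ?_
    simp only [he]
    exact hm x S hS

lemma lht_real [Fintype X] (𝒯 : Set (X → X → ℝ))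
    (hmem : ∀ T ∈ 𝒯, IsTransMat T) (hne : 𝒯.Nonempty) (hcl : IsClosed 𝒯)
    (hsep : HasSepRows 𝒯) (A : Set X) (n : ℕ) :
    ∃ f : X → ℝ, hlowIter 𝒯 A n = fun y => (f y : EReal) := by
  have hi : ∀ x, indE Aᶜ x = ((Set.indicator Aᶜ 1 x : ℝ) : EReal) := by
    intro x
    by_cases hx : x ∈ A <;> simp [indE, hx]
  induction n with
  | zero => exact ⟨_, funext hi⟩
  | succ n ih =>
    obtain ⟨f, hf⟩ := ih
    obtain ⟨T, -, h⟩ := lht_lower_attained 𝒯 hmem hne hcl hsep f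
    refine ⟨fun x => Set.indicator Aᶜ 1 x + Set.indicator Aᶜ 1 x * ∑ y, T x y * f y, ?_⟩
    funext x
    simp only [hlowIter, hf, h, hi]
    norm_cast

lemma lht_lower_mono [Fintype X] (𝒯 : Set (X → X → ℝ))
    (hmem : ∀ T ∈ 𝒯, IsTransMat T) {f g : X → EReal} (h : f ≤ g) (x : X) :
    lowerOp 𝒯 f x ≤ lowerOp 𝒯 g x :=
  iInf₂_mono fun T hT => lht_matApply_mono (hmem T hT) h x

lemma lht_mono [Fintype X] (𝒯 : Set (X → X → ℝ))
    (hmem : ∀ T ∈ 𝒯, IsTransMat T) (A : Set X) : Monotone (hlowIter 𝒯 A) := by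
  refine monotone_nat_of_le_succ fun n => ?_
  induction n with
  | zero =>
    intro x
    have h0 : 0 ≤ lowerOp 𝒯 (hlowIter 𝒯 A 0) x :=
      le_iInf₂ fun T hT => lht_matApply_nonneg (hmem T hT) (lht_ind_nonneg A) x
    have := lht_step_mono A x h0
    simpa [hlowIter] using this
  | succ n ih => exact fun x => lht_step_mono A x (lht_lower_mono 𝒯 hmem ih x)

/-- The lower expected hitting time of the imprecise Markov chain is attained by a single
homogeneous (precise) transition matrix compatible with `𝒯`. -/
theorem lower_hitting_time_attained [Fintype X] [Nonempty X]
    (𝒯 : Set (X → X → ℝ))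
    (hmem : ∀ T ∈ 𝒯, IsTransMat T) (hne : 𝒯.Nonempty) (hcl : IsClosed 𝒯)
    (hcv : Convex ℝ 𝒯) (hsep : HasSepRows 𝒯) (A : Set X) :
    ∃ hlowStar : X → EReal,
      (∀ x, Tendsto (fun n => hlowIter 𝒯 A n x) atTop (𝓝 (hlowStar x))) ∧
      ∃ T ∈ 𝒯, ∀ x, Tendsto (fun n => hPrecIter T A n x) atTop (𝓝 (hlowStar x)) := by
  set H : X → EReal := fun x => ⨆ n, hlowIter 𝒯 A n x with hH
  have hmono := lht_mono 𝒯 hmem A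
  have hlim : ∀ x, Tendsto (fun n => hlowIter 𝒯 A n x) atTop (𝓝 (H x)) := fun x =>
    tendsto_atTop_iSup (fun m n hmn => hmono hmn x)
  have hle : ∀ n x, hlowIter 𝒯 A n x ≤ H x := fun n x => le_iSup (fun n => hlowIter 𝒯 A n x) n
  have hH0 : ∀ x, 0 ≤ H x := fun x => (lht_ind_nonneg A x).trans (hle 0 x)
  refine ⟨H, hlim, ?_⟩
  let K : ℕ → Set (X → X → ℝ) := fun m =>
    {T | T ∈ 𝒯 ∧ ∀ x, indE Aᶜ x + indE Aᶜ x * matApply T (hlowIter 𝒯 A m) x ≤ H x}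
  have hKcl : ∀ m, IsClosed (K m) := by
    intro m
    obtain ⟨f, hf⟩ := lht_real 𝒯 hmem hne hcl hsep A m
    have hK : K m = 𝒯 ∩ ⋂ x, {T : X → X → ℝ |
        indE Aᶜ x + indE Aᶜ x * ((∑ y, T x y * f y : ℝ) : EReal) ≤ H x} := by
      ext T
      rw [Set.mem_inter_iff, Set.mem_iInter]
      change (T ∈ 𝒯 ∧ ∀ x, indE Aᶜ x + indE Aᶜ x * matApply T (hlowIter 𝒯 A m) x ≤ H x) ↔ _
      simp only [hf, lht_matApply_coe]
      rfl
    rw [hK]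
    refine hcl.inter (isClosed_iInter fun x => ?_)
    by_cases hx : x ∈ A
    · simp [indE, hx, hH0 x]
    · have : ∀ T : X → X → ℝ, indE Aᶜ x + indE Aᶜ x * ((∑ y, T x y * f y : ℝ) : EReal)
          = ((1 + ∑ y, T x y * f y : ℝ) : EReal) := by
        intro T
        rw [EReal.coe_add]
        simp [indE, hx]
      simp only [this]
      exact isClosed_le (continuous_coe_real_ereal.comp (by fun_prop)) continuous_const
  have hKne : ∀ m, (K m).Nonempty := by
    intro m
    obtain ⟨f, hf⟩ := lht_real 𝒯 hmem hne hcl hsep A m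
    obtain ⟨T, hT, h⟩ := lht_lower_attained 𝒯 hmem hne hcl hsep f
    refine ⟨T, hT, fun x => ?_⟩
    refine le_trans (le_of_eq ?_) (hle (m+1) x)
    simp only [hlowIter, hf, h, lht_matApply_coe]
  have hKd : ∀ m, K (m+1) ⊆ K m := fun m T hT =>
    ⟨hT.1, fun x => (lht_step_mono A x
      (lht_matApply_mono (hmem T hT.1) (hmono (Nat.le_succ m)) x)).trans (hT.2 x)⟩
  obtain ⟨T, hTK⟩ := IsCompact.nonempty_iInter_of_sequence_nonempty_isCompact_isClosed K hKd hKne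
    ((lht_compact 𝒯 hmem hcl).of_isClosed_subset (hKcl 0) (fun T h => h.1)) hKcl
  rw [Set.mem_iInter] at hTK
  have hT : T ∈ 𝒯 := (hTK 0).1
  have hTt := hmem T hT
  have hfix : ∀ x, indE Aᶜ x + indE Aᶜ x * matApply T H x ≤ H x := by
    intro x
    by_cases hx : x ∈ A
    · simp [indE, hx, hH0 x]
    have ht : Tendsto (fun m => matApply T (hlowIter 𝒯 A m) x) atTop (𝓝 (matApply T H x)) := by
      unfold matApply
      refine lht_nonneg_sum_tendsto _ (fun y m => (T x y : EReal) * hlowIter 𝒯 A m y) _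
        (fun y => mul_nonneg (EReal.coe_nonneg.2 (hTt.1 x y)) (hH0 y)) (fun y => ?_)
      rcases eq_or_ne (T x y) 0 with h0 | h0
      · simp [h0]
      · exact EReal.Tendsto.const_mul (hlim y) (Or.inl (EReal.coe_ne_bot _)) (Or.inl (EReal.coe_ne_top _))
    have hc : ContinuousAt (fun p : EReal × EReal => p.1 + p.2) (1, matApply T H x) :=
      EReal.continuousAt_add (Or.inl (EReal.coe_ne_top 1)) (Or.inl (EReal.coe_ne_bot 1))
    have ht2 := hc.tendsto.comp (tendsto_const_nhds.prodMk_nhds ht)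
    have h3 : (1 : EReal) + matApply T H x ≤ H x :=
      le_of_tendsto' ht2 fun m => by simpa [indE, hx] using (hTK m).2 x
    simpa [indE, hx] using h3
  have hup : ∀ n, hPrecIter T A n ≤ H := by
    intro n
    induction n with
    | zero => exact hle 0
    | succ n ih => exact fun x => (lht_step_mono A x (lht_matApply_mono hTt ih x)).trans (hfix x)
  have hlo : ∀ n, hlowIter 𝒯 A n ≤ hPrecIter T A n := by
    intro n
    induction n with
    | zero => exact le_rfl
    | succ n ih =>
      exact fun x => lht_step_mono A x ((iInf₂_le T hT).trans (lht_matApply_mono hTt ih x))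
  exact ⟨T, hT, fun x => tendsto_of_tendsto_of_tendsto_of_le_of_le (hlim x) tendsto_const_nhds
    (fun n => hlo n x) (fun n => hup n x)⟩
end

section
/- The sequence (plow^n)_{n≥0} is pointwise nondecreasing with values in [0,1], so its pointwise limit plow* := lim_{n→∞} plow^n exists as a function X → [0,1]; moreover plow* is the minimal nonnegative solution of the lower hitting-probability system: plow* satisfies plow* = 1_A + 1_{A^c}·(L plow*), and every nonnegative function p : X → ℝ satisfying p = 1_A + 1_{A^c}·(L p) dominates plow* pointwise. -/
open Filter Topology

variable {X : Type*}

/-- The `{0,1}`-indicator of a set `B ⊆ X`, as a real-valued function. -/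
noncomputable def indR (B : Set X) : X → ℝ := fun x => Set.indicator B 1 x

/-- The restriction of the lower transition operator to real-valued functions
(on which it is real-valued). -/
noncomputable def lowerOpR [Fintype X] (𝒯 : Set (X → X → ℝ)) (f : X → ℝ) (x : X) : ℝ :=
  (lowerOp 𝒯 (fun y => (f y : EReal)) x).toReal

/-- The restriction of the upper transition operator to real-valued functions
(on which it is real-valued). -/
noncomputable def upperOpR [Fintype X] (𝒯 : Set (X → X → ℝ)) (f : X → ℝ) (x : X) : ℝ :=
  (upperOp 𝒯 (fun y => (f y : EReal)) x).toReal

/-- The lower hitting-probability iterates: `plow⁰ = 1_A`,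
`plowⁿ⁺¹ = 1_A + 1_{Aᶜ} · (L plowⁿ)`. -/
noncomputable def plowIter [Fintype X] (𝒯 : Set (X → X → ℝ)) (A : Set X) : ℕ → X → ℝ
  | 0 => indR A
  | n + 1 => fun x => indR A x + indR Aᶜ x * lowerOpR 𝒯 (plowIter 𝒯 A n) x

/-- The upper hitting-probability iterates: `pup⁰ = 1_A`,
`pupⁿ⁺¹ = 1_A + 1_{Aᶜ} · (U pupⁿ)`. -/
noncomputable def pupIter [Fintype X] (𝒯 : Set (X → X → ℝ)) (A : Set X) : ℕ → X → ℝ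
  | 0 => indR A
  | n + 1 => fun x => indR A x + indR Aᶜ x * upperOpR 𝒯 (pupIter 𝒯 A n) x
theorem lowerOpR_aux [Fintype X] (𝒯 : Set (X → X → ℝ))
    (hmem : ∀ T ∈ 𝒯, IsTransMat T) (hne : 𝒯.Nonempty) (f : X → ℝ) (x : X) :
    (∀ T ∈ 𝒯, lowerOpR 𝒯 f x ≤ ∑ y, T x y * f y) ∧
    ∀ c : ℝ, (∀ T ∈ 𝒯, c ≤ ∑ y, T x y * f y) → c ≤ lowerOpR 𝒯 f x := by
  have hm : ∀ T : X → X → ℝ, matApply T (fun y => (f y : EReal)) x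
      = ((∑ y, T x y * f y : ℝ) : EReal) := by
    intro T
    have hs : ∀ s : Finset X, ∑ y ∈ s, (T x y : EReal) * (f y : EReal)
        = ((∑ y ∈ s, T x y * f y : ℝ) : EReal) := by
      classical
      intro s
      induction s using Finset.induction_on with
      | empty => simp
      | insert a s ha ih =>
        rw [Finset.sum_insert ha, Finset.sum_insert ha, ih, EReal.coe_add, EReal.coe_mul]
    exact hs Finset.univ
  have hle : ∀ T ∈ 𝒯, lowerOp 𝒯 (fun y => (f y : EReal)) x
      ≤ ((∑ y, T x y * f y : ℝ) : EReal) := by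
    intro T hT
    rw [← hm]
    exact iInf₂_le T hT
  have hge : ∀ c : ℝ, (∀ T ∈ 𝒯, c ≤ ∑ y, T x y * f y) →
      (c : EReal) ≤ lowerOp 𝒯 (fun y => (f y : EReal)) x := by
    intro c hc
    refine le_iInf₂ fun T hT => ?_
    rw [hm]
    exact EReal.coe_le_coe_iff.2 (hc T hT)
  have hb := hge (-∑ y, |f y|) (by
    intro T hT
    rw [← Finset.sum_neg_distrib]
    refine Finset.sum_le_sum fun y _ => ?_
    have h0 := (hmem T hT).1 x y
    have h1 : T x y ≤ 1 := by
      rw [← (hmem T hT).2 x]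
      exact Finset.single_le_sum (fun z _ => (hmem T hT).1 x z) (Finset.mem_univ y)
    have h2 : -|f y| ≤ f y := neg_abs_le _
    nlinarith [abs_nonneg (f y)])
  obtain ⟨T₀, hT₀⟩ := hne
  have hco : ((lowerOpR 𝒯 f x : ℝ) : EReal) = lowerOp 𝒯 (fun y => (f y : EReal)) x := by
    apply EReal.coe_toReal
    · exact ne_top_of_le_ne_top (EReal.coe_ne_top _) (hle T₀ hT₀)
    · exact ne_bot_of_le_ne_bot (EReal.coe_ne_bot _) hb
  constructor
  · intro T hT
    have := hle T hT
    rw [← hco] at this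
    exact EReal.coe_le_coe_iff.1 this
  · intro c hc
    have := hge c hc
    rw [← hco] at this
    exact EReal.coe_le_coe_iff.1 this

theorem lowerOpR_le_add [Fintype X] (𝒯 : Set (X → X → ℝ))
    (hmem : ∀ T ∈ 𝒯, IsTransMat T) (hne : 𝒯.Nonempty) (f g : X → ℝ) (e : ℝ)
    (h : ∀ y, f y ≤ g y + e) (x : X) : lowerOpR 𝒯 f x ≤ lowerOpR 𝒯 g x + e := by
  rw [← sub_le_iff_le_add]
  refine (lowerOpR_aux 𝒯 hmem hne g x).2 _ fun T hT => ?_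
  have h1 := (lowerOpR_aux 𝒯 hmem hne f x).1 T hT
  have h2 : ∑ y, T x y * f y ≤ ∑ y, (T x y * g y + T x y * e) :=
    Finset.sum_le_sum fun y _ => by
      rw [← mul_add]
      exact mul_le_mul_of_nonneg_left (h y) ((hmem T hT).1 x y)
  rw [Finset.sum_add_distrib, ← Finset.sum_mul, (hmem T hT).2 x] at h2
  linarith

theorem lowerOpR_mono [Fintype X] (𝒯 : Set (X → X → ℝ))
    (hmem : ∀ T ∈ 𝒯, IsTransMat T) (hne : 𝒯.Nonempty) (f g : X → ℝ)
    (h : ∀ y, f y ≤ g y) (x : X) : lowerOpR 𝒯 f x ≤ lowerOpR 𝒯 g x := by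
  simpa using lowerOpR_le_add 𝒯 hmem hne f g 0 (by simpa using h) x

theorem lowerOpR_const [Fintype X] (𝒯 : Set (X → X → ℝ))
    (hmem : ∀ T ∈ 𝒯, IsTransMat T) (hne : 𝒯.Nonempty) (c : ℝ) (x : X) :
    lowerOpR 𝒯 (fun _ => c) x = c := by
  have h : ∀ T ∈ 𝒯, ∑ y, T x y * c = c := fun T hT => by
    rw [← Finset.sum_mul, (hmem T hT).2 x, one_mul]
  obtain ⟨h1, h2⟩ := lowerOpR_aux 𝒯 hmem hne (fun _ => c) x
  apply le_antisymm
  · obtain ⟨T, hT⟩ := hne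
    exact (h1 T hT).trans_eq (h T hT)
  · exact h2 c fun T hT => (h T hT).ge

/-- The lower hitting-probability iterates are pointwise nondecreasing with values in
`[0,1]`, so converge pointwise; their limit is the minimal nonnegative solution of the
lower hitting-probability system. -/
theorem plowStar_minimal_solution [Fintype X] [Nonempty X]
    (𝒯 : Set (X → X → ℝ))
    (hmem : ∀ T ∈ 𝒯, IsTransMat T) (hne : 𝒯.Nonempty) (hcl : IsClosed 𝒯)
    (hcv : Convex ℝ 𝒯) (hsep : HasSepRows 𝒯) (A : Set X) :
    (∀ x, Monotone fun n => plowIter 𝒯 A n x) ∧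
    (∀ n x, plowIter 𝒯 A n x ∈ Set.Icc (0 : ℝ) 1) ∧
    ∃ plowStar : X → ℝ,
      (∀ x, Tendsto (fun n => plowIter 𝒯 A n x) atTop (𝓝 (plowStar x))) ∧
      (∀ x, plowStar x ∈ Set.Icc (0 : ℝ) 1) ∧
      (∀ x, plowStar x = indR A x + indR Aᶜ x * lowerOpR 𝒯 plowStar x) ∧
      ∀ p : X → ℝ, (∀ x, 0 ≤ p x) →
        (∀ x, p x = indR A x + indR Aᶜ x * lowerOpR 𝒯 p x) →
        ∀ x, plowStar x ≤ p x := by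
  have hI : ∀ x ∈ A, indR A x = 1 ∧ indR Aᶜ x = 0 := fun x hx => by simp [indR, hx]
  have hO : ∀ x ∉ A, indR A x = 0 ∧ indR Aᶜ x = 1 := fun x hx => by simp [indR, hx]
  have hstepI : ∀ n, ∀ x ∈ A, plowIter 𝒯 A n x = 1 := by
    intro n x hx
    cases n <;> simp [plowIter, hI x hx]
  have hstepO : ∀ n, ∀ x ∉ A, plowIter 𝒯 A (n + 1) x = lowerOpR 𝒯 (plowIter 𝒯 A n) x := by
    intro n x hx
    simp [plowIter, hO x hx]
  have hicc : ∀ n x, plowIter 𝒯 A n x ∈ Set.Icc (0 : ℝ) 1 := by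
    intro n
    induction n with
    | zero =>
      intro x
      by_cases hx : x ∈ A <;> simp [plowIter, indR, hx]
    | succ n ih =>
      intro x
      by_cases hx : x ∈ A
      · simp [hstepI _ x hx]
      · rw [hstepO n x hx]
        constructor
        · rw [← lowerOpR_const 𝒯 hmem hne 0 x]
          exact lowerOpR_mono 𝒯 hmem hne _ _ (fun y => (ih y).1) x
        · rw [← lowerOpR_const 𝒯 hmem hne 1 x]
          exact lowerOpR_mono 𝒯 hmem hne _ _ (fun y => (ih y).2) x
  have hsucc : ∀ n x, plowIter 𝒯 A n x ≤ plowIter 𝒯 A (n + 1) x := by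
    intro n
    induction n with
    | zero =>
      intro x
      by_cases hx : x ∈ A
      · simp [hstepI _ x hx]
      · have : plowIter 𝒯 A 0 x = 0 := by simp [plowIter, hO x hx]
        rw [this]
        exact (hicc _ x).1
    | succ n ih =>
      intro x
      by_cases hx : x ∈ A
      · simp [hstepI _ x hx]
      · rw [hstepO n x hx, hstepO (n + 1) x hx]
        exact lowerOpR_mono 𝒯 hmem hne _ _ ih x
  have hmono : ∀ x, Monotone fun n => plowIter 𝒯 A n x :=
    fun x => monotone_nat_of_le_succ fun n => hsucc n x
  have hbdd : ∀ x, BddAbove (Set.range fun n => plowIter 𝒯 A n x) := fun x =>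
    ⟨1, by rintro _ ⟨n, rfl⟩; exact (hicc n x).2⟩
  refine ⟨hmono, hicc, fun x => ⨆ n, plowIter 𝒯 A n x, ?_⟩
  generalize hP : (fun x => ⨆ n, plowIter 𝒯 A n x) = P
  have hlim : ∀ x, Tendsto (fun n => plowIter 𝒯 A n x) atTop (𝓝 (P x)) := by
    intro x
    rw [← hP]
    exact tendsto_atTop_ciSup (hmono x) (hbdd x)
  have hleP : ∀ n x, plowIter 𝒯 A n x ≤ P x := fun n x => (hmono x).ge_of_tendsto (hlim x) n
  refine ⟨hlim, fun x => isClosed_Icc.mem_of_tendsto (hlim x)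
    (Eventually.of_forall fun n => hicc n x), ?_, ?_⟩
  · intro x
    by_cases hx : x ∈ A
    · rw [(hI x hx).1, (hI x hx).2, zero_mul, add_zero]
      refine tendsto_nhds_unique (hlim x) ?_
      simp [hstepI _ x hx]
    · rw [(hO x hx).1, (hO x hx).2, zero_add, one_mul]
      apply le_antisymm
      · refine le_of_tendsto ((tendsto_add_atTop_iff_nat 1).2 (hlim x))
          (Eventually.of_forall fun n => ?_)
        rw [hstepO n x hx]
        exact lowerOpR_mono 𝒯 hmem hne _ _ (hleP n) x
      · refine le_of_forall_pos_le_add fun e he => ?_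
        have hev : ∀ᶠ n in atTop, ∀ y, P y - e < plowIter 𝒯 A n y :=
          eventually_all.2 fun y => (hlim y).eventually (lt_mem_nhds (by linarith))
        obtain ⟨n, hn⟩ := hev.exists
        have h1 := lowerOpR_le_add 𝒯 hmem hne P (plowIter 𝒯 A n) e
          (fun y => by linarith [hn y]) x
        rw [← hstepO n x hx] at h1
        linarith [hleP (n + 1) x]
  · intro p hp0 hp x
    have hall : ∀ n x, plowIter 𝒯 A n x ≤ p x := by
      intro n
      induction n with
      | zero =>
        intro x
        by_cases hx : x ∈ A
        · rw [hp x, hstepI _ x hx]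
          simp [hI x hx]
        · have : plowIter 𝒯 A 0 x = 0 := by simp [plowIter, hO x hx]
          rw [this]
          exact hp0 x
      | succ n ih =>
        intro x
        by_cases hx : x ∈ A
        · rw [hp x, hstepI _ x hx]
          simp [hI x hx]
        · rw [hp x, hstepO _ x hx, (hO x hx).1, (hO x hx).2, zero_add, one_mul]
          exact lowerOpR_mono 𝒯 hmem hne _ _ ih x
    exact le_of_tendsto (hlim x) (Eventually.of_forall fun n => hall n x)
end

section
/- Let 𝒮 be the A-inert modification of 𝒯, and let slow^n and sup^n denote the hitting-time iterates built from the lower and upper transition operators of 𝒮 by the same recursion as hlow^n and hup^n. Then slow^n = hlow^n and sup^n = hup^n for every n ≥ 0; in particular, the lower and upper expected hitting times of an imprecise Markov chain coincide with those of its A-inert modification: lim_{n→∞} slow^n = lim_{n→∞} hlow^n and lim_{n→∞} sup^n = lim_{n→∞} hup^n. -/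
open Filter Topology

variable {X : Type*}

/-- The `A`-inert modification of `𝒯`: all transition matrices `S` with `S x x = 1` for
every `x ∈ A`, whose rows outside `A` agree with the rows of some element of `𝒯`. -/
def inertMod [Fintype X] (𝒯 : Set (X → X → ℝ)) (A : Set X) : Set (X → X → ℝ) :=
  {S | IsTransMat S ∧ (∀ x ∈ A, S x x = 1) ∧ ∃ T ∈ 𝒯, ∀ x ∉ A, ∀ y, S x y = T x y}
theorem inert_exists_left [Fintype X] (𝒯 : Set (X → X → ℝ)) (hmem : ∀ T ∈ 𝒯, IsTransMat T)
    (A : Set X) (T : X → X → ℝ) (hT : T ∈ 𝒯) :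
    ∃ S ∈ inertMod 𝒯 A, ∀ x ∉ A, ∀ y, S x y = T x y := by
  classical
  refine ⟨fun x y => if x ∈ A then (if x = y then 1 else 0) else T x y,
    ⟨⟨?_, ?_⟩, ?_, T, hT, ?_⟩, ?_⟩
  · intro x y
    have := (hmem T hT).1 x y
    dsimp only
    split_ifs <;> first | exact this | norm_num
  · intro x
    by_cases hx : x ∈ A
    · simp [hx]
    · simpa [hx] using (hmem T hT).2 x
  · intro x hx
    simp [hx]
  · intro x hx y
    simp [hx]
  · intro x hx y
    simp [hx]

theorem matApply_row_congr [Fintype X] {S T : X → X → ℝ} (f : X → EReal) {x : X}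
    (h : ∀ y, S x y = T x y) : matApply S f x = matApply T f x := by
  simp [matApply, h]

theorem lowerOp_inert [Fintype X] (𝒯 : Set (X → X → ℝ)) (hmem : ∀ T ∈ 𝒯, IsTransMat T)
    (A : Set X) (f : X → EReal) (x : X) (hx : x ∉ A) :
    lowerOp (inertMod 𝒯 A) f x = lowerOp 𝒯 f x := by
  apply le_antisymm
  · refine le_iInf₂ fun T hT => ?_
    obtain ⟨S, hS, h⟩ := inert_exists_left 𝒯 hmem A T hT
    rw [← matApply_row_congr f (h x hx)]
    exact iInf₂_le S hS
  · refine le_iInf₂ fun S hS => ?_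
    obtain ⟨T, hT, h⟩ := hS.2.2
    rw [matApply_row_congr f (h x hx)]
    exact iInf₂_le T hT

theorem upperOp_inert [Fintype X] (𝒯 : Set (X → X → ℝ)) (hmem : ∀ T ∈ 𝒯, IsTransMat T)
    (A : Set X) (f : X → EReal) (x : X) (hx : x ∉ A) :
    upperOp (inertMod 𝒯 A) f x = upperOp 𝒯 f x := by
  apply le_antisymm
  · refine iSup₂_le fun S hS => ?_
    obtain ⟨T, hT, h⟩ := hS.2.2
    rw [matApply_row_congr f (h x hx)]
    exact le_iSup₂ (f := fun T (_ : T ∈ 𝒯) => matApply T f x) T hT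
  · refine iSup₂_le fun T hT => ?_
    obtain ⟨S, hS, h⟩ := inert_exists_left 𝒯 hmem A T hT
    rw [← matApply_row_congr f (h x hx)]
    exact le_iSup₂ (f := fun T (_ : T ∈ inertMod 𝒯 A) => matApply T f x) S hS

/-- The hitting-time iterates of the `A`-inert modification coincide with those of the
original model; in particular the lower and upper expected hitting times of an imprecise
Markov chain coincide with those of its `A`-inert modification. -/
theorem hitIter_inertMod_eq [Fintype X] [Nonempty X]
    (𝒯 : Set (X → X → ℝ))
    (hmem : ∀ T ∈ 𝒯, IsTransMat T) (hne : 𝒯.Nonempty) (hcl : IsClosed 𝒯)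
    (hcv : Convex ℝ 𝒯) (hsep : HasSepRows 𝒯) (A : Set X) :
    (∀ n, hlowIter (inertMod 𝒯 A) A n = hlowIter 𝒯 A n) ∧
    (∀ n, hupIter (inertMod 𝒯 A) A n = hupIter 𝒯 A n) ∧
    (∀ x, (⨆ n, hlowIter (inertMod 𝒯 A) A n x) = ⨆ n, hlowIter 𝒯 A n x) ∧
    (∀ x, (⨆ n, hupIter (inertMod 𝒯 A) A n x) = ⨆ n, hupIter 𝒯 A n x) := by
  have h1 : ∀ n, hlowIter (inertMod 𝒯 A) A n = hlowIter 𝒯 A n := by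
    intro n
    induction n with
    | zero => rfl
    | succ n ih =>
      funext x
      simp only [hlowIter, ih]
      by_cases hx : x ∈ A
      · simp [indE, hx]
      · rw [lowerOp_inert 𝒯 hmem A _ x hx]
  have h2 : ∀ n, hupIter (inertMod 𝒯 A) A n = hupIter 𝒯 A n := by
    intro n
    induction n with
    | zero => rfl
    | succ n ih =>
      funext x
      simp only [hupIter, ih]
      by_cases hx : x ∈ A
      · simp [indE, hx]
      · rw [upperOp_inert 𝒯 hmem A _ x hx]
  exact ⟨h1, h2, fun x => by simp only [h1], fun x => by simp only [h2]⟩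
end

section
/- Define 𝒞 := {x ∈ A^c : (U^n 1_A)(x) = 0 for all n ≥ 1}, where U^n denotes the n-fold composition of the upper transition operator U. Then for every T ∈ 𝒯 and every x ∈ 𝒞 one has ∑_{y∈𝒞} T(x,y) = 1, i.e. (T 1_𝒞)(x) = 1: every transition matrix compatible with 𝒯 keeps the set 𝒞 absorbing. -/
open Filter Topology

variable {X : Type*}

/-- The set `𝒞` of states in `Aᶜ` from which reaching `A` in any finite number of steps
has upper probability zero: `(Uⁿ 1_A)(x) = 0` for all `n ≥ 1`. -/
def badC [Fintype X] (𝒯 : Set (X → X → ℝ)) (A : Set X) : Set X :=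
  {x | x ∈ Aᶜ ∧ ∀ n, 1 ≤ n → (upperOp 𝒯)^[n] (indE A) x = 0}
lemma aux_nonneg [Fintype X] (𝒯 : Set (X → X → ℝ))
    (hmem : ∀ T ∈ 𝒯, IsTransMat T) (hne : 𝒯.Nonempty) (A : Set X) (n : ℕ) :
    ∀ x, 0 ≤ (upperOp 𝒯)^[n] (indE A) x := by
  induction n with
  | zero =>
    intro x
    simp only [Function.iterate_zero, id, indE]
    exact Set.indicator_nonneg (fun _ _ => zero_le_one) x
  | succ n ih =>
    intro x
    rw [Function.iterate_succ_apply']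
    obtain ⟨T, hT⟩ := hne
    refine le_trans ?_ (le_iSup₂ (f := fun T (_ : T ∈ 𝒯) => matApply T _ x) T hT)
    exact Finset.sum_nonneg fun y _ =>
      mul_nonneg (EReal.coe_nonneg.2 ((hmem T hT).1 x y)) (ih y)

lemma aux_zero [Fintype X] (𝒯 : Set (X → X → ℝ))
    (hmem : ∀ T ∈ 𝒯, IsTransMat T) (hne : 𝒯.Nonempty) (A : Set X)
    (T : X → X → ℝ) (hT : T ∈ 𝒯) (x : X) (hx : x ∈ badC 𝒯 A) (y : X)
    (hy : y ∉ badC 𝒯 A) : T x y = 0 := by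
  have h : ∃ n, (upperOp 𝒯)^[n] (indE A) y ≠ 0 := by
    by_contra! h
    refine hy ⟨fun hA => ?_, fun n _ => h n⟩
    have := h 0
    simp [indE, hA] at this
  obtain ⟨n, hn⟩ := h
  have h1 := hx.2 (n + 1) (by omega)
  rw [Function.iterate_succ_apply'] at h1
  have hnn : ∀ z, 0 ≤ (T x z : EReal) * (upperOp 𝒯)^[n] (indE A) z := fun z =>
    mul_nonneg (EReal.coe_nonneg.2 ((hmem T hT).1 x z)) (aux_nonneg 𝒯 hmem hne A n z)
  have h2 : matApply T ((upperOp 𝒯)^[n] (indE A)) x ≤ 0 := by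
    rw [← h1]
    exact le_iSup₂ (f := fun T (_ : T ∈ 𝒯) => matApply T _ x) T hT
  have h3 : (T x y : EReal) * (upperOp 𝒯)^[n] (indE A) y ≤ 0 :=
    le_trans (Finset.single_le_sum (fun z _ => hnn z) (Finset.mem_univ y)) h2
  rcases mul_eq_zero.1 (le_antisymm h3 (hnn y)) with h | h
  · exact_mod_cast h
  · exact absurd h hn

/-- Every transition matrix compatible with `𝒯` keeps the set `𝒞` absorbing:
`∑_{y ∈ 𝒞} T(x,y) = 1`, i.e. `(T 1_𝒞)(x) = 1`, for every `x ∈ 𝒞`. -/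
theorem badC_absorbing [Fintype X] [Nonempty X]
    (𝒯 : Set (X → X → ℝ))
    (hmem : ∀ T ∈ 𝒯, IsTransMat T) (hne : 𝒯.Nonempty) (hcl : IsClosed 𝒯)
    (hcv : Convex ℝ 𝒯) (hsep : HasSepRows 𝒯) (A : Set X) :
    ∀ T ∈ 𝒯, ∀ x ∈ badC 𝒯 A,
      (∑ y, Set.indicator (badC 𝒯 A) (T x) y) = 1 ∧
      matApply T (indE (badC 𝒯 A)) x = 1 := by
  intro T hT x hx
  have hz := aux_zero 𝒯 hmem hne A T hT x hx
  constructor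
  · rw [← (hmem T hT).2 x]
    refine Finset.sum_congr rfl fun y _ => ?_
    by_cases hy : y ∈ badC 𝒯 A
    · simp [hy]
    · simp [hy, hz y hy]
  · have h : matApply T (indE (badC 𝒯 A)) x = ∑ y, (T x y : EReal) := by
      refine Finset.sum_congr rfl fun y _ => ?_
      by_cases hy : y ∈ badC 𝒯 A
      · simp [indE, hy]
      · simp [indE, hy, hz y hy]
    rw [h, ← EReal.coe_one, ← (hmem T hT).2 x]
    exact (map_sum (⟨⟨Real.toEReal, EReal.coe_zero⟩, EReal.coe_add⟩ : ℝ →+ EReal) _ _).symm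
end

section
/- Define 𝒞 := {x ∈ A^c : (U^n 1_A)(x) = 0 for all n ≥ 1}, and for each x ∈ A^c \ 𝒞 let n_x be the least n ≥ 1 such that (U^n 1_A)(x) > 0. If A^c \ 𝒞 is nonempty, then there exists a single transition matrix T ∈ 𝒯 such that (T^{n_x} 1_A)(x) > 0 for every x ∈ A^c \ 𝒞, where T^n denotes the n-th matrix power of T. -/
open Filter Topology

variable {X : Type*}

theorem matApply_pos_iff [Fintype X] {T : X → X → ℝ} (hT : IsTransMat T) {f : X → EReal}
    (hf : ∀ y, 0 ≤ f y) (x : X) :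
    0 < matApply T f x ↔ ∃ y, 0 < T x y ∧ 0 < f y := by
  have hnn : ∀ y ∈ Finset.univ, 0 ≤ (T x y : EReal) * f y := fun y _ =>
    mul_nonneg (EReal.coe_nonneg.2 (hT.1 x y)) (hf y)
  constructor
  · intro h
    by_contra hc
    push Not at hc
    have : matApply T f x = 0 := by
      unfold matApply
      refine Finset.sum_eq_zero fun y _ => ?_
      rcases (hT.1 x y).eq_or_lt with h0 | h0
      · rw [← h0]; simp
      · rw [le_antisymm (hc y h0) (hf y)]; simp
    exact h.ne' this
  · rintro ⟨y, h1, h2⟩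
    have h3 : 0 < (T x y : EReal) * f y := EReal.mul_pos (EReal.coe_pos.2 h1) h2
    exact h3.trans_le (Finset.single_le_sum hnn (Finset.mem_univ y))

theorem matApply_nonneg' [Fintype X] {T : X → X → ℝ} (hT : IsTransMat T) {f : X → EReal}
    (hf : ∀ y, 0 ≤ f y) (x : X) : 0 ≤ matApply T f x :=
  Finset.sum_nonneg fun y _ => mul_nonneg (EReal.coe_nonneg.2 (hT.1 x y)) (hf y)

theorem upperOp_pos_iff [Fintype X] {𝒯 : Set (X → X → ℝ)} (hmem : ∀ T ∈ 𝒯, IsTransMat T)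
    {f : X → EReal} (hf : ∀ y, 0 ≤ f y) (x : X) :
    0 < upperOp 𝒯 f x ↔ ∃ T ∈ 𝒯, ∃ y, 0 < T x y ∧ 0 < f y := by
  unfold upperOp
  simp only [lt_iSup_iff]
  constructor
  · rintro ⟨T, hT, h⟩
    exact ⟨T, hT, (matApply_pos_iff (hmem T hT) hf x).1 h⟩
  · rintro ⟨T, hT, h⟩
    exact ⟨T, hT, (matApply_pos_iff (hmem T hT) hf x).2 h⟩

theorem upperOp_nonneg' [Fintype X] {𝒯 : Set (X → X → ℝ)} (hmem : ∀ T ∈ 𝒯, IsTransMat T)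
    (hne : 𝒯.Nonempty) {f : X → EReal} (hf : ∀ y, 0 ≤ f y) (x : X) : 0 ≤ upperOp 𝒯 f x := by
  obtain ⟨T, hT⟩ := hne
  exact (matApply_nonneg' (hmem T hT) hf x).trans (le_iSup₂ (f := fun T _ => matApply T f x) T hT)

theorem indE_nonneg' (A : Set X) (x : X) : 0 ≤ indE A x :=
  Set.indicator_nonneg (fun _ _ => zero_le_one) x

theorem indE_pos_iff (A : Set X) (x : X) : 0 < indE A x ↔ x ∈ A := by
  by_cases h : x ∈ A <;> simp [indE, h]

/-- If `Aᶜ \ 𝒞` is nonempty then there is a single transition matrix `T ∈ 𝒯` such that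
`(T^{n_x} 1_A)(x) > 0` for every `x ∈ Aᶜ \ 𝒞`, where `n_x` is the least `n ≥ 1` with
`(Uⁿ 1_A)(x) > 0`. -/
theorem exists_transMat_reaching [Fintype X] [Nonempty X]
    (𝒯 : Set (X → X → ℝ))
    (hmem : ∀ T ∈ 𝒯, IsTransMat T) (hne : 𝒯.Nonempty) (hcl : IsClosed 𝒯)
    (hcv : Convex ℝ 𝒯) (hsep : HasSepRows 𝒯) (A : Set X)
    (hne' : (Aᶜ \ badC 𝒯 A).Nonempty)
    (nx : X → ℕ)
    (hnx : ∀ x ∈ Aᶜ \ badC 𝒯 A,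
      1 ≤ nx x ∧ 0 < (upperOp 𝒯)^[nx x] (indE A) x ∧
      ∀ m, 1 ≤ m → m < nx x → ¬ 0 < (upperOp 𝒯)^[m] (indE A) x) :
    ∃ T ∈ 𝒯, ∀ x ∈ Aᶜ \ badC 𝒯 A, 0 < (matApply T)^[nx x] (indE A) x := by
  have hU : ∀ n x, 0 ≤ (upperOp 𝒯)^[n] (indE A) x := by
    intro n
    induction n with
    | zero => exact indE_nonneg' A
    | succ n ih =>
      rw [Function.iterate_succ_apply']
      exact upperOp_nonneg' hmem hne ih
  have hstep : ∀ x, ∃ T ∈ 𝒯, x ∈ Aᶜ \ badC 𝒯 A → ∃ y, 0 < T x y ∧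
      ((nx x = 1 ∧ y ∈ A) ∨ (y ∈ Aᶜ \ badC 𝒯 A ∧ nx x = nx y + 1)) := by
    intro x
    by_cases hx : x ∈ Aᶜ \ badC 𝒯 A
    swap
    · obtain ⟨T, hT⟩ := hne
      exact ⟨T, hT, fun h => absurd h hx⟩
    obtain ⟨h1, hpos, hmin⟩ := hnx x hx
    obtain ⟨n, hn⟩ : ∃ n, nx x = n + 1 := ⟨nx x - 1, by omega⟩
    rw [hn, Function.iterate_succ_apply', upperOp_pos_iff hmem (hU n)] at hpos
    obtain ⟨T, hT, y, hxy, hy⟩ := hpos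
    have hle : ∀ k, 0 < (upperOp 𝒯)^[k] (indE A) y → n ≤ k := by
      intro k hk
      by_contra hlt
      refine hmin (k + 1) (by omega) (by omega) ?_
      rw [Function.iterate_succ_apply', upperOp_pos_iff hmem (hU k)]
      exact ⟨T, hT, y, hxy, hk⟩
    refine ⟨T, hT, fun _ => ⟨y, hxy, ?_⟩⟩
    by_cases hyA : y ∈ A
    · have := hle 0 ((indE_pos_iff A y).2 hyA)
      exact Or.inl ⟨by omega, hyA⟩
    · have hn1 : 1 ≤ n := by
        rcases Nat.eq_zero_or_pos n with h0 | h0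
        · subst h0
          exact absurd ((indE_pos_iff A y).1 hy) hyA
        · exact h0
      have hyg : y ∈ Aᶜ \ badC 𝒯 A := ⟨hyA, fun hb => hy.ne' (hb.2 n hn1)⟩
      obtain ⟨g1, g2, g3⟩ := hnx y hyg
      have a1 := hle _ g2
      have a2 : ¬ n < nx y := fun h => g3 n hn1 h hy
      exact Or.inr ⟨hyg, by omega⟩
  choose sel hsel hsel' using hstep
  obtain ⟨T, hT, hTs⟩ := hsep sel hsel
  have hM : ∀ n x, 0 ≤ (matApply T)^[n] (indE A) x := by
    intro n
    induction n with
    | zero => exact indE_nonneg' A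
    | succ n ih =>
      rw [Function.iterate_succ_apply']
      exact matApply_nonneg' (hmem T hT) ih
  refine ⟨T, hT, ?_⟩
  have key : ∀ n, ∀ x ∈ Aᶜ \ badC 𝒯 A, nx x = n → 0 < (matApply T)^[n] (indE A) x := by
    intro n
    induction n with
    | zero =>
      intro x hx h
      have := (hnx x hx).1
      omega
    | succ n ih =>
      intro x hx h
      obtain ⟨y, hxy, hy⟩ := hsel' x hx
      rw [← hTs] at hxy
      rw [Function.iterate_succ_apply', matApply_pos_iff (hmem T hT) (hM n)]
      refine ⟨y, hxy, ?_⟩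
      rcases hy with ⟨h1, hyA⟩ | ⟨hyg, h1⟩
      · obtain rfl : n = 0 := by omega
        exact (indE_pos_iff A y).2 hyA
      · exact ih y hyg (by omega)
  exact fun x hx => key _ x hx rfl
end
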